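/- Let U be a strongly continuous unitary representation of ℝ^{s+1} with spectral measure E_w, D a dense subspace of H, and S ⊆ ℝ^{s+1} a closed set. If for every ψ, φ ∈ D and every g ∈ L¹(ℝ^{s+1}) with supp g̃ ∩ S = ∅ one has ∫ g(x)⟨ψ, U(x)φ⟩ dx = 0, then E_w(complement of S) = 0, i.e., the spectrum of the generator is contained in S. -/

import Mathlib

/-!
By Fubini, `∫ g(x) ⟪ψ, U x ψ⟫ dx = (2π)^{n/2} ∫ g̃ dμψ`: this is the functional calculus identity
for `g̃(P)`, tested against `ψ` alone. By Fourier inversion every smooth compactly supported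
function is some `g̃` with `g ∈ L¹`. The hypothesis on `ψ ∈ D` therefore says that `μ ψ` integrates
every test function supported in `Sᶜ` to zero, so `μ ψ Sᶜ = 0`, that is, `E Sᶜ ψ = 0`; the density
of `D` and the continuity of `E Sᶜ` do the rest.
-/

open MeasureTheory
open scoped InnerProductSpace

/-- The Fourier transform on `ℝ^n` with the symmetric normalization,
`g̃(p) = (2π)^{-n/2} ∫ g(x) e^{i⟨x,p⟩} dx` (sign convention fixed as in
Stone's theorem `U(x) = ∫ e^{ipx} dE(p)`). -/
noncomputable def symmFT {n : ℕ} (g : EuclideanSpace ℝ (Fin n) → ℂ)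
    (p : EuclideanSpace ℝ (Fin n)) : ℂ :=
  (((2 * Real.pi) ^ (-(n : ℝ) / 2) : ℝ) : ℂ) *
    ∫ x, Complex.exp (Complex.I * (⟪x, p⟫_ℝ : ℂ)) * g x

section FourierTransform

open scoped FourierTransform SchwartzMap

variable {n : ℕ}

theorem symmFT_eq_fourierInv (g : EuclideanSpace ℝ (Fin n) → ℂ) (p : EuclideanSpace ℝ (Fin n)) :
    symmFT g p = ((2 * Real.pi) ^ (-(n : ℝ) / 2) : ℝ) * 𝓕⁻ g ((2 * Real.pi)⁻¹ • p) := by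
  simp only [symmFT, Real.fourierInv_eq', inner_smul_right,
    mul_inv_cancel_left₀ Real.two_pi_pos.ne', smul_eq_mul, mul_comm Complex.I]

theorem exists_schwartzMap_symmFT_eq (f : 𝓢(EuclideanSpace ℝ (Fin n), ℂ)) :
    ∃ g : 𝓢(EuclideanSpace ℝ (Fin n), ℂ), symmFT g = f := by
  let dilation : EuclideanSpace ℝ (Fin n) ≃L[ℝ] EuclideanSpace ℝ (Fin n) :=
    ContinuousLinearEquiv.smulLeft (Units.mk0 (2 * Real.pi) Real.two_pi_pos.ne')
  let c : ℂ := ((2 * Real.pi) ^ (-(n : ℝ) / 2) : ℝ)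
  have hc : c ≠ 0 := Complex.ofReal_ne_zero.2 (Real.rpow_pos_of_pos Real.two_pi_pos _).ne'
  let h : 𝓢(EuclideanSpace ℝ (Fin n), ℂ) :=
    c⁻¹ • SchwartzMap.compCLMOfContinuousLinearEquiv ℂ dilation f
  have h_apply (q) : h q = c⁻¹ * f ((2 * Real.pi) • q) := rfl
  let g : 𝓢(EuclideanSpace ℝ (Fin n), ℂ) := 𝓕 h
  have hg : 𝓕⁻ g = h := FourierTransform.fourierInv_fourier_eq h
  refine ⟨g, funext fun p => ?_⟩
  calc symmFT g p
      = c * h ((2 * Real.pi)⁻¹ • p) := by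
        rw [symmFT_eq_fourierInv, ← SchwartzMap.fourierInv_coe, hg]
    _ = f p := by
        rw [h_apply, smul_inv_smul₀ Real.two_pi_pos.ne', mul_inv_cancel_left₀ hc]

theorem integral_mul_charFun_eq_integral_symmFT (ν : Measure (EuclideanSpace ℝ (Fin n)))
    [IsFiniteMeasure ν] {g : EuclideanSpace ℝ (Fin n) → ℂ} (hg : Integrable g) :
    ∫ x, g x * charFun ν x = ((2 * Real.pi) ^ ((n : ℝ) / 2) : ℝ) * ∫ p, symmFT g p ∂ν := by
  have hint : Integrable
      (fun z : EuclideanSpace ℝ (Fin n) × EuclideanSpace ℝ (Fin n) =>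
        g z.1 * Complex.exp (⟪z.2, z.1⟫_ℝ * Complex.I)) (volume.prod ν) :=
    (hg.comp_fst ν).mul_bdd (c := 1) (by fun_prop)
      (.of_forall fun z => (Complex.norm_exp_ofReal_mul_I _).le)
  have hconst : (((2 * Real.pi) ^ ((n : ℝ) / 2) : ℝ) : ℂ) *
      ((2 * Real.pi) ^ (-(n : ℝ) / 2) : ℝ) = 1 := by
    rw [← Complex.ofReal_mul, ← Real.rpow_add Real.two_pi_pos, neg_div, add_neg_cancel,
      Real.rpow_zero, Complex.ofReal_one]
  calc ∫ x, g x * charFun ν x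
      = ∫ x, ∫ p, g x * Complex.exp (⟪p, x⟫_ℝ * Complex.I) ∂ν := by
        simp only [charFun_apply, integral_const_mul]
    _ = ∫ p, (∫ x, g x * Complex.exp (⟪p, x⟫_ℝ * Complex.I)) ∂ν :=
        integral_integral_swap hint
    _ = ∫ p, (∫ x, Complex.exp (Complex.I * ⟪x, p⟫_ℝ) * g x) ∂ν := by
        congr! 4 with p x
        rw [mul_comm, mul_comm Complex.I, real_inner_comm]
    _ = ((2 * Real.pi) ^ ((n : ℝ) / 2) : ℝ) * ∫ p, symmFT g p ∂ν := by
        simp only [symmFT, integral_const_mul, ← mul_assoc, hconst, one_mul]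

end FourierTransform

section Support

open scoped SchwartzMap ContDiff

theorem measure_eq_zero_of_integral_contDiff_eq_zero {V : Type*} [NormedAddCommGroup V]
    [NormedSpace ℝ V] [FiniteDimensional ℝ V] [MeasurableSpace V] [BorelSpace V]
    {ν : Measure V} [IsLocallyFiniteMeasure ν] {O : Set V} (hO : IsOpen O)
    (h : ∀ f : V → ℝ, ContDiff ℝ ∞ f → HasCompactSupport f → tsupport f ⊆ O → ∫ x, f x ∂ν = 0) :
    ν O = 0 := by
  have hone : ∀ᵐ x ∂ν, x ∈ O → (1 : ℝ) = 0 :=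
    hO.ae_eq_zero_of_integral_contDiff_smul_eq_zero
      ((locallyIntegrable_const 1).locallyIntegrableOn O)
      (by simpa only [smul_eq_mul, mul_one] using h)
  exact measure_eq_zero_iff_ae_notMem.2 (hone.mono fun x hx hxO => one_ne_zero (hx hxO))

theorem measure_compl_eq_zero_of_integral_mul_charFun_eq_zero {n : ℕ}
    {ν : Measure (EuclideanSpace ℝ (Fin n))} [IsFiniteMeasure ν]
    {S : Set (EuclideanSpace ℝ (Fin n))} (hS : IsClosed S)
    (h : ∀ g : 𝓢(EuclideanSpace ℝ (Fin n), ℂ), tsupport (symmFT g) ∩ S = ∅ →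
      ∫ x, g x * charFun ν x = 0) :
    ν Sᶜ = 0 := by
  refine measure_eq_zero_of_integral_contDiff_eq_zero hS.isOpen_compl fun f hf hfc hfS => ?_
  have hfc' : HasCompactSupport (fun p => (f p : ℂ)) := hfc.comp_left Complex.ofReal_zero
  obtain ⟨g, hg⟩ := exists_schwartzMap_symmFT_eq
    (hfc'.toSchwartzMap (Complex.ofRealCLM.contDiff.comp hf))
  replace hg : symmFT g = fun p => (f p : ℂ) := hg
  have hsupp : tsupport (symmFT g) ∩ S = ∅ := by
    rw [hg, ← Set.disjoint_iff_inter_eq_empty, ← Set.subset_compl_iff_disjoint_right]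
    exact (tsupport_comp_subset Complex.ofReal_zero f).trans hfS
  have hzero := h g hsupp
  rw [integral_mul_charFun_eq_integral_symmFT ν g.integrable, hg, integral_complex_ofReal] at hzero
  have hconst : (2 * Real.pi) ^ ((n : ℝ) / 2) ≠ 0 :=
    (Real.rpow_pos_of_pos Real.two_pi_pos _).ne'
  exact_mod_cast (mul_eq_zero.1 hzero).resolve_left (Complex.ofReal_ne_zero.2 hconst)

end Support

open scoped SchwartzMap in
theorem stmt13_general {n : ℕ} {H : Type*} [NormedAddCommGroup H] [InnerProductSpace ℂ H]
    (U : EuclideanSpace ℝ (Fin n) → (H →L[ℂ] H))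
    (E : Set (EuclideanSpace ℝ (Fin n)) → (H →L[ℂ] H))
    (μ : H → Measure (EuclideanSpace ℝ (Fin n))) [∀ ψ, IsFiniteMeasure (μ ψ)]
    (hU : ∀ (ψ : H) (x : EuclideanSpace ℝ (Fin n)),
      ⟪ψ, U x ψ⟫_ℂ = ∫ p, Complex.exp (Complex.I * (⟪p, x⟫_ℝ : ℂ)) ∂(μ ψ))
    (hE : ∀ (ψ : H) (Δ : Set (EuclideanSpace ℝ (Fin n))),
      MeasurableSet Δ → ‖E Δ ψ‖ ^ 2 = (μ ψ Δ).toReal)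
    (D : Set H) (hD : Dense D)
    (S : Set (EuclideanSpace ℝ (Fin n))) (hS : IsClosed S)
    (hvanish : ∀ ψ ∈ D, ∀ g : 𝓢(EuclideanSpace ℝ (Fin n), ℂ), tsupport (symmFT g) ∩ S = ∅ →
      ∫ x, g x * ⟪ψ, U x ψ⟫_ℂ = 0) :
    E Sᶜ = 0 := by
  have hUchar (ψ x) : ⟪ψ, U x ψ⟫_ℂ = charFun (μ ψ) x := by
    simp only [hU, charFun_apply, mul_comm Complex.I]
  have hμ : ∀ ψ ∈ D, μ ψ Sᶜ = 0 := fun ψ hψ =>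
    measure_compl_eq_zero_of_integral_mul_charFun_eq_zero hS <| by
      simpa only [hUchar] using hvanish ψ hψ
  have hED : Set.EqOn (E Sᶜ) 0 D := fun ψ hψ => by
    simpa [hμ ψ hψ] using hE ψ Sᶜ hS.measurableSet.compl
  exact DFunLike.coe_injective ((E Sᶜ).continuous.ext_on hD continuous_zero hED)

/-- Let `U` be a unitary representation of `ℝ^{s+1}` with
spectral measure `E_w`, described weakly by the diagonal scalar measures
`μ ψ = ⟪ψ, E_w(·) ψ⟫` (so `μ ψ (univ) = ‖ψ‖²`, `‖E_w(Δ)ψ‖² = μ ψ Δ` and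
`⟪ψ, U x ψ⟫ = ∫ e^{i⟨p,x⟩} dμψ(p)`).  Let `D ⊆ H` be dense and `S ⊆ ℝ^{s+1}`
closed.  If for all `ψ, φ ∈ D` and all `g ∈ L¹` with `supp g̃ ∩ S = ∅` one has
`∫ g(x) ⟪ψ, U x φ⟫ dx = 0`, then `E_w(Sᶜ) = 0`, i.e. the spectrum of the
generator is contained in `S`. -/
theorem stmt13 {s : ℕ} {H : Type*} [NormedAddCommGroup H]
    [InnerProductSpace ℂ H] [CompleteSpace H]
    (U : EuclideanSpace ℝ (Fin (s + 1)) → (H →L[ℂ] H))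
    (hUnit : ∀ x, star (U x) * U x = 1 ∧ U x * star (U x) = 1)
    (E : Set (EuclideanSpace ℝ (Fin (s + 1))) → (H →L[ℂ] H))
    (μ : H → Measure (EuclideanSpace ℝ (Fin (s + 1))))
    (hμfin : ∀ ψ : H, μ ψ Set.univ = ENNReal.ofReal (‖ψ‖ ^ 2))
    (hU : ∀ (ψ : H) (x : EuclideanSpace ℝ (Fin (s + 1))),
      ⟪ψ, U x ψ⟫_ℂ = ∫ p, Complex.exp (Complex.I * (⟪p, x⟫_ℝ : ℂ)) ∂(μ ψ))
    (hE : ∀ (ψ : H) (Δ : Set (EuclideanSpace ℝ (Fin (s + 1)))),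
      MeasurableSet Δ → ‖E Δ ψ‖ ^ 2 = (μ ψ Δ).toReal)
    (D : Set H) (hD : Dense D)
    (S : Set (EuclideanSpace ℝ (Fin (s + 1)))) (hS : IsClosed S)
    (hvanish : ∀ ψ ∈ D, ∀ φ ∈ D,
      ∀ g : EuclideanSpace ℝ (Fin (s + 1)) → ℂ, Integrable g →
        Function.support (symmFT g) ∩ S = ∅ →
        ∫ x, g x * ⟪ψ, U x φ⟫_ℂ = 0) :
    E Sᶜ = 0 := by
  have (ψ : H) : IsFiniteMeasure (μ ψ) := ⟨(hμfin ψ).trans_lt ENNReal.ofReal_lt_top⟩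
  exact stmt13_general U E μ hU hE D hD S hS fun ψ hψ g hg => hvanish ψ hψ ψ hψ g g.integrable
    (Set.subset_empty_iff.1 (hg ▸ Set.inter_subset_inter_left S (subset_tsupport _)))
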